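/- For each k ∈ {3, 4, 5, 6, 7}, there exists a 1-perfect code C in F_3^{13} such that the affine span of C equals F_3^{13} (C is full-rank) and the kernel ker(C) has F_3-dimension k. -/

import Mathlib

/-!
The linear syndrome of the Hamming code is perturbed by permutations attached to the coordinate
triangle of the projective plane. Passing from `x` to `x - a e_p` must realize every change of the
syndrome. A nonzero change with no zero entry comes from a point `p` off the triangle. Otherwise, in
the cyclic order, some zero entry `i - 1` has a nonzero entry `i + 1` next but one to it: the points
of side `i` leave entry `i - 1` unchanged, `a` is read off entry `i + 1`, and the position of `p` on
the side is read off entry `i`, since the permutations of that entry depend only on the sum along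
side `i`, which `a` determines. Hence every choice of permutations gives a perfect code.

In the ternary case, suitable permutations make the code the preimage, under a surjective linear
map, of the graph of a quadratic-by-linear map. Span and periods are read off the graph: the square
terms make the code full-rank, and they already cut the kernel down to dimension 7; each of the four
further switchings couples one more linear coordinate to a square and lowers the dimension by 1.
-/

/-- `(U, V)` is a tiling of the ambient space `S`: every element of `S` is uniquely
represented as the sum of an element of `U` and an element of `V`. -/
def IsTiling {S : Type*} [AddCommGroup S] (U V : Set S) : Prop :=
  ∀ s : S, ∃! p : S × S, p.1 ∈ U ∧ p.2 ∈ V ∧ p.1 + p.2 = s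

/-- The radius-1 Hamming ball centered at 0: vectors with at most one nonzero coordinate. -/
def hammingBall1 (F : Type*) [Zero F] (N : ℕ) : Set (Fin N → F) :=
  {c | {j | c j ≠ 0}.Subsingleton}

/-- The set of periods of `X`: vectors `w` with `X + w = X`. -/
def periods {S : Type*} [AddCommGroup S] (X : Set S) : Set S :=
  {w | (fun v => v + w) '' X = X}

/-- The kernel of `X` (as a set): vectors all of whose scalar multiples are periods of `X`.
This is the maximal `F`-subspace contained in `periods X`. -/
def kerSet (F : Type*) {S : Type*} [CommRing F] [AddCommGroup S] [Module F S]
    (X : Set S) : Set S :=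
  {w | ∀ a : F, a • w ∈ periods X}

/-- The dimension of the kernel of `X` (the kernel set is a subspace, so spanning it
does not change it). -/
noncomputable def kerDim (F : Type*) {S : Type*} [CommRing F] [AddCommGroup S] [Module F S]
    (X : Set S) : ℕ :=
  Module.finrank F (Submodule.span F (kerSet F X))

section Tiling

variable {S G F : Type*}

theorem isTiling_preimage_singleton [AddCommGroup S] {U : Set S} {σ : S → G}
    (hσ : ∀ s, Function.Bijective fun u : U => σ (s - u)) (g : G) : IsTiling U (σ ⁻¹' {g}) := by
  intro s
  obtain ⟨u, hu, huniq⟩ := (hσ s).existsUnique g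
  refine ⟨(u, s - u), ⟨u.2, hu, add_sub_cancel _ _⟩, ?_⟩
  rintro ⟨u', v⟩ ⟨hu', hv, rfl⟩
  obtain rfl : ⟨u', hu'⟩ = u := huniq ⟨u', hu'⟩ (by simpa using hv)
  simp

theorem single_mem_hammingBall1 [Zero F] {N : ℕ} (j : Fin N) (a : F) :
    Pi.single j a ∈ hammingBall1 F N :=
  Set.subsingleton_singleton.anti (Pi.support_single_subset (i := j) (a := a))

theorem eq_zero_or_exists_eq_single [Zero F] {N : ℕ} {v : Fin N → F}
    (hv : v ∈ hammingBall1 F N) : v = 0 ∨ ∃ j a, a ≠ 0 ∧ v = Pi.single j a := by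
  refine or_iff_not_imp_left.2 fun hne => ?_
  obtain ⟨j, hj⟩ := Function.ne_iff.1 hne
  refine ⟨j, v j, hj, funext fun i => ?_⟩
  obtain rfl | hij := eq_or_ne i j
  · simp
  · rw [Pi.single_eq_of_ne hij]
    exact not_not.1 fun hi => hij (hv hi hj)

variable [Field F] [Finite F] {N : ℕ}

theorem natCard_hammingBall1_le : Nat.card (hammingBall1 F N) ≤ N * Nat.card Fˣ + 1 := by
  let f : Option (Fin N × Fˣ) → hammingBall1 F N := fun o =>
    o.elim ⟨0, by simp [hammingBall1]⟩ fun p => ⟨Pi.single p.1 p.2, single_mem_hammingBall1 _ _⟩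
  have hf : Function.Surjective f := by
    rintro ⟨v, hv⟩
    obtain rfl | ⟨j, a, ha, rfl⟩ := eq_zero_or_exists_eq_single hv
    · exact ⟨none, rfl⟩
    · exact ⟨some (j, Units.mk0 a ha), rfl⟩
  simpa using Nat.card_le_card_of_surjective f hf

theorem isTiling_hammingBall1_preimage_singleton {σ : (Fin N → F) → G}
    (hcard : N * Nat.card Fˣ + 1 ≤ Nat.card G)
    (hσ : ∀ x g, ∃ j a, σ (x - (Pi.single j a : Fin N → F)) = g) (g : G) :
    IsTiling (hammingBall1 F N) (σ ⁻¹' {g}) := by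
  refine isTiling_preimage_singleton (fun x => ?_) g
  have hsurj : Function.Surjective fun u : hammingBall1 F N => σ (x - u) := fun g' =>
    let ⟨j, a, h⟩ := hσ x g'
    ⟨⟨_, single_mem_hammingBall1 j a⟩, h⟩
  exact hsurj.bijective_of_nat_card_le (natCard_hammingBall1_le.trans hcard)

end Tiling

section Kernel

variable {F S S' : Type*}

theorem mem_periods_iff [AddCommGroup S] {X : Set S} {w : S} :
    w ∈ periods X ↔ ∀ v, v + w ∈ X ↔ v ∈ X := by
  rw [periods, Set.mem_ofPred_eq, Set.image_add_right, Set.ext_iff,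
    (Equiv.addRight w).surjective.forall]
  simp [iff_comm]

theorem periods_graphOn_univ [AddCommGroup S] [AddCommGroup S'] (φ : S → S') :
    periods (Set.univ.graphOn φ) = {p | ∀ v, φ (v + p.1) = φ v + p.2} := by
  ext p
  simp only [mem_periods_iff, Set.mem_graphOn, Set.mem_univ, true_and, Prod.forall, Prod.fst_add,
    Prod.snd_add, Set.mem_ofPred_eq]
  refine forall_congr' fun v => ⟨fun h => (h _).2 rfl, fun h l => ?_⟩
  rw [h, add_left_inj]

variable [Field F] [AddCommGroup S] [Module F S] [AddCommGroup S'] [Module F S']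

theorem periods_preimage {f : S →ₗ[F] S'} (hf : Function.Surjective f) (X : Set S') :
    periods (f ⁻¹' X) = f ⁻¹' periods X := by
  ext w
  simp only [mem_periods_iff, Set.mem_preimage, map_add, hf.forall]

theorem kerDim_of_periods_eq {X : Set S} {W : Submodule F S} (h : periods X = W) :
    kerDim F X = Module.finrank F W := by
  have hker : kerSet F X = W := by
    ext w
    rw [kerSet, h]
    exact ⟨fun hw => one_smul F w ▸ hw 1, fun hw a => W.smul_mem a hw⟩
  rw [kerDim, hker, Submodule.span_eq]

theorem kerDim_add_finrank_of_periods_eq_ker [FiniteDimensional F S] {X : Set S}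
    {f : S →ₗ[F] S'} (hf : Function.Surjective f) (h : periods X = LinearMap.ker f) :
    kerDim F X + Module.finrank F S' = Module.finrank F S := by
  rw [kerDim_of_periods_eq h, ← LinearMap.finrank_range_add_finrank_ker f,
    LinearMap.range_eq_top.2 hf, finrank_top, add_comm]

end Kernel

section Span

variable {F V W : Type*} [Field F] [AddCommGroup V] [Module F V] [AddCommGroup W] [Module F W]

theorem affineSpan_eq_top_of_span_eq_top {X : Set V} (h0 : 0 ∈ X)
    (h : Submodule.span F X = ⊤) : affineSpan F X = ⊤ := by
  rw [← Set.insert_eq_of_mem h0, ← AffineSubspace.coe_eq_univ_iff, affineSpan_insert_zero, h,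
    Submodule.top_coe]

theorem span_graphOn_univ_eq_top {φ : V → W}
    (h : ∀ k, ((0 : V), k) ∈ Submodule.span F (Set.univ.graphOn φ)) :
    Submodule.span F (Set.univ.graphOn φ) = ⊤ := by
  refine Submodule.eq_top_iff'.2 fun ⟨w, k⟩ => ?_
  have hw : (w, φ w) ∈ Submodule.span F (Set.univ.graphOn φ) :=
    Submodule.subset_span (by simp)
  simpa using add_mem hw (h (k - φ w))

theorem affineSpan_preimage_graphOn_univ_eq_top {U : Type*} [AddCommGroup U] [Module F U]
    {f : U →ₗ[F] V × W} (hf : Function.Surjective f) {φ : V → W} (hφ : φ 0 = 0)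
    (h : ∀ k, ((0 : V), k) ∈ Submodule.span F (Set.univ.graphOn φ)) :
    affineSpan F (f ⁻¹' Set.univ.graphOn φ) = ⊤ := by
  have h0 : (0 : V × W) ∈ Set.univ.graphOn φ := by simp [hφ]
  refine affineSpan_eq_top_of_span_eq_top (by simpa using h0) ?_
  rw [Submodule.span_preimage_eq ⟨0, h0⟩ (by simp [LinearMap.range_eq_top.2 hf]),
    span_graphOn_univ_eq_top h, Submodule.comap_top]

end Span

section SwitchedCode

/-- The points of the projective plane over `F`, arranged around the coordinate triangle:
`Sum.inl (u, v)` is the point `[u : v : 1]` off the triangle, and the points `Sum.inr (i, j)`,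
`j : F`, make up the side through the vertices `i` and `i + 1` without the vertex `i`. -/
abbrev PlanePoint (F : Type*) [Field F] : Type _ := (Fˣ × Fˣ) ⊕ (Fin 3 × F)

variable {F : Type*} [Field F]

theorem card_planePoint_mul_card_units_add_one [Finite F] {N : ℕ} (ε : Fin N ≃ PlanePoint F) :
    N * Nat.card Fˣ + 1 = Nat.card (Fin 3 → F) := by
  have hN : N = Nat.card (PlanePoint F) := by simp [← Nat.card_congr ε]
  have hF : Nat.card F = Nat.card Fˣ + 1 := by
    rw [Nat.card_units, Nat.sub_add_cancel Nat.card_pos]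
  rw [hN, Nat.card_sum, Nat.card_prod, Nat.card_prod, Nat.card_fun, hF]
  simp only [Nat.card_eq_fintype_card, Fintype.card_fin]
  ring

/-- Homogeneous coordinates of `[u : v : 1]` after permuting the values of `u` by `ρ v`. -/
def interiorColumn (ρ : Fˣ → Equiv.Perm Fˣ) (P : Fˣ × Fˣ) : Fin 3 → Fˣ := ![ρ P.2 P.1, P.2, 1]

theorem exists_mul_interiorColumn_eq (ρ : Fin 3 → Fˣ → Equiv.Perm Fˣ) {d : Fin 3 → F}
    (hd : ∀ i, d i ≠ 0) : ∃ P a, ∀ i, interiorColumn (ρ i) P i * a = d i := by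
  let v := Units.mk0 (d 1 / d 2) (div_ne_zero (hd 1) (hd 2))
  let u := Units.mk0 (d 0 / d 2) (div_ne_zero (hd 0) (hd 2))
  refine ⟨((ρ 0 v).symm u, v), d 2, fun i => ?_⟩
  fin_cases i <;> simp [interiorColumn, u, v, hd 2]

theorem exists_sub_one_and_not_add_one {p : Fin 3 → Prop} (hp : ∃ i, p i) (hp' : ∃ i, ¬p i) :
    ∃ i, p (i - 1) ∧ ¬p (i + 1) := by
  simp only [Fin.exists_fin_succ, Fin.isValue, Fin.succ_zero_eq_one, Fin.succ_one_eq_two,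
    IsEmpty.exists_iff, or_false, zero_sub, zero_add, sub_self, Fin.reduceAdd, Fin.reduceSub] at *
  tauto

variable [Fintype F]

/-- The sum of the coordinates of a vector on the `i`-th side of the triangle. -/
def sideSum (i : Fin 3) : (PlanePoint F → F) →ₗ[F] F := ∑ j, LinearMap.proj (Sum.inr (i, j))

/-- The sum of the coordinates of a vector on the `i`-th side of the triangle, weighted by the
position of the point on that side. -/
def sideMoment (i : Fin 3) : (PlanePoint F → F) →ₗ[F] F := ∑ j, j • LinearMap.proj (Sum.inr (i, j))

/-- The sum of the coordinates of a vector off the triangle, weighted by `c`. -/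
def interiorSum [DecidableEq F] (c : Fˣ × Fˣ → F) : (PlanePoint F → F) →ₗ[F] F :=
  ∑ P, c P • LinearMap.proj (Sum.inl P)

/-- The syndrome of the Hamming code, switched along the sides of the triangle by `π` and off the
triangle by `ρ`; the switching in the `i`-th entry is controlled by `sideSum i`. Up to the choice
of representatives of the points, trivial `π` and `ρ` give the usual linear syndrome. -/
def syndrome [DecidableEq F] (π : Fin 3 → F → Equiv.Perm F) (ρ : F → Fˣ → Equiv.Perm Fˣ)
    (x : PlanePoint F → F) (i : Fin 3) : F :=
  interiorSum (fun P => (interiorColumn (ρ (sideSum i x)) P i : F)) x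
    - π i (sideSum i x) (sideMoment i x) - sideSum (i - 1) x

variable [DecidableEq F]

@[simp]
theorem sideSum_single_inl (i : Fin 3) (P : Fˣ × Fˣ) (a : F) :
    sideSum i (Pi.single (Sum.inl P) a) = 0 := by
  simp [sideSum]

@[simp]
theorem sideMoment_single_inl (i : Fin 3) (P : Fˣ × Fˣ) (a : F) :
    sideMoment i (Pi.single (Sum.inl P) a) = 0 := by
  simp [sideMoment]

@[simp]
theorem interiorSum_single_inl (c : Fˣ × Fˣ → F) (P : Fˣ × Fˣ) (a : F) :
    interiorSum c (Pi.single (Sum.inl P) a) = c P * a := by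
  simp [interiorSum, Pi.single_apply]

@[simp]
theorem sideSum_single_inr (i k : Fin 3) (j a : F) :
    sideSum i (Pi.single (Sum.inr (k, j)) a) = if i = k then a else 0 := by
  simp [sideSum, Pi.single_apply, ite_and, Finset.sum_ite_irrel]

@[simp]
theorem sideMoment_single_inr (i k : Fin 3) (j a : F) :
    sideMoment i (Pi.single (Sum.inr (k, j)) a) = if i = k then j * a else 0 := by
  simp [sideMoment, Pi.single_apply, ite_and, Finset.sum_ite_irrel]

@[simp]
theorem interiorSum_single_inr (c : Fˣ × Fˣ → F) (p : Fin 3 × F) (a : F) :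
    interiorSum c (Pi.single (Sum.inr p) a) = 0 := by
  simp [interiorSum]

variable (π : Fin 3 → F → Equiv.Perm F) (ρ : F → Fˣ → Equiv.Perm Fˣ) (x : PlanePoint F → F)

theorem syndrome_sub_single_inl (P : Fˣ × Fˣ) (a : F) (i : Fin 3) :
    syndrome π ρ (x - Pi.single (Sum.inl P) a) i =
      syndrome π ρ x i - interiorColumn (ρ (sideSum i x)) P i * a := by
  simp only [syndrome, map_sub, sideSum_single_inl, sideMoment_single_inl, interiorSum_single_inl,
    sub_zero]
  ring

theorem syndrome_sub_single_inr_sub_one (i : Fin 3) (j a : F) :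
    syndrome π ρ (x - Pi.single (Sum.inr (i, j)) a) (i - 1) = syndrome π ρ x (i - 1) := by
  have h : i - 1 ≠ i ∧ i - 1 - 1 ≠ i := by clear * -; decide +revert
  simp [syndrome, h]

theorem syndrome_sub_single_inr_add_one (i : Fin 3) (j a : F) :
    syndrome π ρ (x - Pi.single (Sum.inr (i, j)) a) (i + 1) = syndrome π ρ x (i + 1) + a := by
  simp only [syndrome, map_sub, sideSum_single_inr, sideMoment_single_inr, interiorSum_single_inr,
    add_eq_left, one_ne_zero, ↓reduceIte, sub_zero, add_sub_cancel_right]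
  ring

theorem exists_syndrome_sub_single_inr_self_eq (i : Fin 3) {a : F} (ha : a ≠ 0) (b : F) :
    ∃ j, syndrome π ρ (x - Pi.single (Sum.inr (i, j)) a) i = b := by
  let m := (π i (sideSum i x - a)).symm
    (interiorSum (fun P => (interiorColumn (ρ (sideSum i x - a)) P i : F)) x
      - sideSum (i - 1) x - b)
  refine ⟨(sideMoment i x - m) / a, ?_⟩
  simp only [syndrome, map_sub, sideSum_single_inr, sideMoment_single_inr, interiorSum_single_inr,
    ↓reduceIte, sub_eq_self, one_ne_zero, sub_zero, div_mul_cancel₀ _ ha, sub_sub_cancel,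
    Equiv.apply_symm_apply, m]
  ring

theorem exists_syndrome_sub_single_eq (g : Fin 3 → F) :
    ∃ p a, syndrome π ρ (x - Pi.single p a) = g := by
  by_cases hall : ∀ i, syndrome π ρ x i ≠ g i
  · obtain ⟨P, a, h⟩ := exists_mul_interiorColumn_eq (fun i => ρ (sideSum i x))
      (d := syndrome π ρ x - g) fun i => sub_ne_zero.2 (hall i)
    refine ⟨Sum.inl P, a, funext fun i => ?_⟩
    rw [syndrome_sub_single_inl, h, Pi.sub_apply, sub_sub_cancel]
  by_cases heq : syndrome π ρ x = g
  · exact ⟨Sum.inl 1, 0, by simpa using heq⟩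
  obtain ⟨i, hi, hi'⟩ := exists_sub_one_and_not_add_one (p := fun i => syndrome π ρ x i = g i)
    (by simpa using hall) (by simpa [funext_iff] using heq)
  obtain ⟨j, hj⟩ := exists_syndrome_sub_single_inr_self_eq π ρ x i
    (sub_ne_zero.2 (Ne.symm hi')) (g i)
  refine ⟨Sum.inr (i, j), g (i + 1) - syndrome π ρ x (i + 1), funext fun k => ?_⟩
  obtain rfl | rfl | rfl : k = i ∨ k = i - 1 ∨ k = i + 1 := by
    clear * -; decide +revert
  · exact hj
  · rw [syndrome_sub_single_inr_sub_one, hi]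
  · rw [syndrome_sub_single_inr_add_one, add_sub_cancel]

/-- The code with switchings `π` and `ρ`, in the coordinates enumerated by `ε`. -/
def switchedCode {N : ℕ} (ε : Fin N ≃ PlanePoint F) : Set (Fin N → F) :=
  {x | syndrome π ρ (LinearMap.funLeft F F ε.symm x) = 0}

theorem isTiling_switchedCode {N : ℕ} (ε : Fin N ≃ PlanePoint F) :
    IsTiling (hammingBall1 F N) (switchedCode π ρ ε) := by
  refine isTiling_hammingBall1_preimage_singleton (card_planePoint_mul_card_units_add_one ε).le
    (σ := fun x => syndrome π ρ (LinearMap.funLeft F F ε.symm x)) (fun x g => ?_) 0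
  obtain ⟨p, a, h⟩ := exists_syndrome_sub_single_eq π ρ (LinearMap.funLeft F F ε.symm x) g
  refine ⟨ε.symm p, a, ?_⟩
  have hsingle : LinearMap.funLeft F F ε.symm (Pi.single (ε.symm p) a) = Pi.single p a := by
    ext q
    simp [Pi.single_apply, LinearMap.funLeft_apply]
  rwa [map_sub, hsingle]

end SwitchedCode

section Quadratic

variable {F : Type*} [Field F]

theorem quadratic_coeff_eq_zero (h2 : (2 : F) ≠ 0) {a b c : F}
    (h : ∀ t, a * t ^ 2 + b * t + c = 0) : a = 0 ∧ b = 0 ∧ c = 0 := by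
  have hc : c = 0 := by linear_combination h 0
  refine ⟨mul_left_cancel₀ h2 ?_, mul_left_cancel₀ h2 ?_, hc⟩
  · linear_combination h 1 + h (-1) - 2 * hc
  · linear_combination h 1 - h (-1)

/-- The equation says that `(b, n, a, k)` is a period of a graph in one entry, with `y` a side sum
and `m` a moment; the shift to `y + b - 1` is what separates the `e` and `e'` terms. -/
theorem period_coeff_conditions (h2 : (2 : F) ≠ 0) {e e' b n a k : F}
    (he : e * e = e) (h : ∀ y m, (y + b) ^ 2 + (1 + e * (y + b) ^ 2) * (m + n)
      - e' * (y + b - 1) ^ 2 * a = y ^ 2 + (1 + e * y ^ 2) * m + k) :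
    b = 0 ∧ e * n = 0 ∧ e' * a = 0 ∧ k = n := by
  obtain ⟨hquad, hlin, hconst⟩ := quadratic_coeff_eq_zero h2 (a := e * n - e' * a)
    (b := 2 * (b + b * (e * n) - e' * a * (b - 1)))
    (c := b ^ 2 + (1 + e * b ^ 2) * n - e' * (b - 1) ^ 2 * a - k)
    fun t => by linear_combination h t 0
  obtain ⟨-, heb, -⟩ := quadratic_coeff_eq_zero h2 (a := 0) (b := 2 * (e * b)) (c := e * b ^ 2)
    fun t => by linear_combination h t 1 - h t 0
  replace heb := (mul_eq_zero_iff_left h2).1 heb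
  replace hlin := (mul_eq_zero_iff_left h2).1 hlin
  have hb : b = -(e * n) := by linear_combination hlin + (1 - b) * hquad
  have hen : e * n = 0 := by linear_combination (-n) * he - heb + e * hb
  have he'a : e' * a = 0 := by linear_combination hen - hquad
  have hb0 : b = 0 := by linear_combination hb - hen
  subst hb0
  exact ⟨rfl, hen, he'a, by linear_combination -hconst - he'a⟩

end Quadratic

section Ternary

/-- The sum of the coordinates off the triangle, weighted by homogeneous coordinates `[u : v : 1]`
of the points. -/
def columnSum (i : Fin 3) : (PlanePoint (ZMod 3) → ZMod 3) →ₗ[ZMod 3] ZMod 3 :=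
  interiorSum fun P => (interiorColumn 1 P i : ZMod 3)

/-- The part of `columnSum 0` coming from the points `[u : v : 1]` with `v ≠ 1`. -/
def flipSum : (PlanePoint (ZMod 3) → ZMod 3) →ₗ[ZMod 3] ZMod 3 :=
  interiorSum fun P => if P.2 = 1 then 0 else (P.1 : ZMod 3)

/-- The quantities that determine membership in a ternary code: the sums along the sides, the
linear functionals on which a switching can act, and the column sums. -/
def ternaryCoords : (PlanePoint (ZMod 3) → ZMod 3) →ₗ[ZMod 3]
    ((Fin 3 → ZMod 3) × (Option (Fin 3) → ZMod 3)) × (Fin 3 → ZMod 3) :=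
  ((LinearMap.pi sideSum).prod (LinearMap.pi fun o => o.elim flipSum sideMoment)).prod
    (LinearMap.pi columnSum)

theorem interiorSum_zmod_three (c : (ZMod 3)ˣ × (ZMod 3)ˣ → ZMod 3)
    (x : PlanePoint (ZMod 3) → ZMod 3) :
    interiorSum c x = c (1, 1) * x (Sum.inl (1, 1)) + c (-1, 1) * x (Sum.inl (-1, 1))
      + c (1, -1) * x (Sum.inl (1, -1)) + c (-1, -1) * x (Sum.inl (-1, -1)) := by
  have huniv : (Finset.univ : Finset (ZMod 3)ˣ) = {1, -1} := by decide
  have hne : (1 : (ZMod 3)ˣ) ≠ -1 := by decide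
  simp [interiorSum, Fintype.sum_prod_type_right, huniv, hne, add_assoc]

theorem exists_interior_flipSum_columnSum_eq (s : Fin 3 × ZMod 3 → ZMod 3) (f : ZMod 3)
    (h : Fin 3 → ZMod 3) :
    ∃ r, flipSum (Sum.elim r s) = f ∧ ∀ i, columnSum i (Sum.elim r s) = h i := by
  let r (P : (ZMod 3)ˣ × (ZMod 3)ˣ) : ZMod 3 :=
    h 2 + P.2 * h 1 - P.1 * if P.2 = 1 then h 0 - f else f
  have hne : (-1 : (ZMod 3)ˣ) ≠ 1 := by decide
  have h3 : (3 : ZMod 3) = 0 := rfl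
  have h₁₁ : r (1, 1) = h 2 + h 1 - (h 0 - f) := by simp [r]
  have h₂₁ : r (-1, 1) = h 2 + h 1 + (h 0 - f) := by simp [r, sub_eq_add_neg]
  have h₁₂ : r (1, -1) = h 2 - h 1 - f := by simp [r, hne, sub_eq_add_neg]
  have h₂₂ : r (-1, -1) = h 2 - h 1 + f := by simp [r, hne, sub_eq_add_neg]
  have hflip : flipSum (Sum.elim r s) = r (1, -1) - r (-1, -1) := by
    simp [flipSum, interiorSum_zmod_three, hne, sub_eq_add_neg]
  have hcolumn₀ : columnSum 0 (Sum.elim r s) =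
      r (1, 1) - r (-1, 1) + r (1, -1) - r (-1, -1) := by
    simp [columnSum, interiorColumn, interiorSum_zmod_three, sub_eq_add_neg]
  have hcolumn₁ : columnSum 1 (Sum.elim r s) =
      r (1, 1) + r (-1, 1) - r (1, -1) - r (-1, -1) := by
    simp [columnSum, interiorColumn, interiorSum_zmod_three, sub_eq_add_neg]
  have hcolumn₂ : columnSum 2 (Sum.elim r s) =
      r (1, 1) + r (-1, 1) + r (1, -1) + r (-1, -1) := by
    simp [columnSum, interiorColumn, interiorSum_zmod_three]
  refine ⟨r, ?_, fun | 0 => ?_ | 1 => ?_ | 2 => ?_⟩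
  · linear_combination hflip + h₁₂ - h₂₂ - f * h3
  · linear_combination hcolumn₀ + h₁₁ - h₂₁ + h₁₂ - h₂₂ - h 0 * h3
  · linear_combination hcolumn₁ + h₁₁ + h₂₁ - h₁₂ - h₂₂ + h 1 * h3
  · linear_combination hcolumn₂ + h₁₁ + h₂₁ + h₁₂ + h₂₂ + h 2 * h3

theorem ternaryCoords_surjective : Function.Surjective ternaryCoords := by
  rintro ⟨⟨y, z⟩, h⟩
  let s (p : Fin 3 × ZMod 3) : ZMod 3 :=
    (Pi.single 0 (y p.1 - z (some p.1)) + Pi.single 1 (z (some p.1)) : ZMod 3 → ZMod 3) p.2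
  obtain ⟨r, hflip, hcolumn⟩ := exists_interior_flipSum_columnSum_eq s (z none) h
  have hsum (i : Fin 3) : sideSum i (Sum.elim r s) = y i := by
    simp [sideSum, s, Finset.sum_add_distrib]
  have hmoment (i : Fin 3) : sideMoment i (Sum.elim r s) = z (some i) := by
    simp [sideMoment, s, mul_add, Finset.sum_add_distrib, Pi.single_apply]
  exact ⟨Sum.elim r s, Prod.ext (Prod.ext (funext hsum) (funext (Option.forall.2 ⟨hflip, hmoment⟩)))
    (funext hcolumn)⟩

theorem one_add_mul_sq_ne_zero {e : ZMod 3} (he : e * e = e) (t : ZMod 3) :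
    1 + e * t ^ 2 ≠ 0 := by
  decide +revert

variable (T : Finset (Option (Fin 3)))

/-- The indicator function of the set `T` of switchings that are turned on. -/
def switchIndicator (o : Option (Fin 3)) : ZMod 3 := if o ∈ T then 1 else 0

theorem switchIndicator_mul_self (o : Option (Fin 3)) :
    switchIndicator T o * switchIndicator T o = switchIndicator T o := by
  simp [switchIndicator]

/-- The sign `-1` if the switching `o` is on and `t ≠ 0`, and the sign `1` otherwise. -/
def switchSign (o : Option (Fin 3)) (t : ZMod 3) : (ZMod 3)ˣ :=
  Units.mk0 (1 + switchIndicator T o * t ^ 2)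
    (one_add_mul_sq_ne_zero (switchIndicator_mul_self T o) t)

/-- The switching along the `i`-th side: the translation by `y ^ 2`, composed with a sign if the
switching `some i` is on. The translation is present even when `T` is empty, since it is what makes
the code full-rank. -/
def ternarySidePerm (i : Fin 3) (y : ZMod 3) : Equiv.Perm (ZMod 3) :=
  (switchSign T (some i) y).mulLeft.trans (Equiv.addLeft (y ^ 2))

/-- The switching off the triangle: if the switching `none` is on, the two points `[u : v : 1]`
with `v ≠ 1` are interchanged unless `y = 1`. The shift from `y` to `y - 1` keeps the effect of
this switching from cancelling that of the switching `some 0`. -/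
def ternaryInteriorPerm (y : ZMod 3) (v : (ZMod 3)ˣ) : Equiv.Perm (ZMod 3)ˣ :=
  Equiv.mulLeft (if v = 1 then 1 else switchSign T none (y - 1))

/-- The ternary code with the set `T` of switchings turned on: `none` acts off the triangle, and
`some i` acts along the `i`-th side. -/
def ternaryCode {N : ℕ} (ε : Fin N ≃ PlanePoint (ZMod 3)) : Set (Fin N → ZMod 3) :=
  switchedCode (ternarySidePerm T) (ternaryInteriorPerm T) ε

/-- The strength of the switching off the triangle in each entry of the syndrome: it acts on the
zeroth entry only. -/
def interiorSwitch : Fin 3 → ZMod 3 := Pi.single 0 (switchIndicator T none)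

/-- The column sums of a codeword, as a function of its side sums `w.1`, its moments `w.2 (some i)`
and its flip sum `w.2 none`. -/
def codewordColumnSum (w : (Fin 3 → ZMod 3) × (Option (Fin 3) → ZMod 3)) (i : Fin 3) : ZMod 3 :=
  w.1 i ^ 2 + (1 + switchIndicator T (some i) * w.1 i ^ 2) * w.2 (some i)
    - interiorSwitch T i * (w.1 i - 1) ^ 2 * w.2 none + w.1 (i - 1)

theorem interiorColumn_ternaryInteriorPerm (y : ZMod 3) (P : (ZMod 3)ˣ × (ZMod 3)ˣ) (i : Fin 3) :
    (interiorColumn (ternaryInteriorPerm T y) P i : ZMod 3) = interiorColumn 1 P i +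
      interiorSwitch T i * (y - 1) ^ 2 * if P.2 = 1 then 0 else (P.1 : ZMod 3) := by
  by_cases hv : P.2 = 1 <;> fin_cases i <;>
    simp [interiorColumn, ternaryInteriorPerm, switchSign, interiorSwitch, hv, add_mul]

theorem interiorSum_add_mul {F : Type*} [Field F] [Fintype F] [DecidableEq F]
    (c c' : Fˣ × Fˣ → F) (a : F) (x : PlanePoint F → F) :
    interiorSum (fun P => c P + a * c' P) x = interiorSum c x + a * interiorSum c' x := by
  simp [interiorSum, add_mul, Finset.sum_add_distrib, Finset.mul_sum, mul_assoc]

theorem syndrome_ternary (x : PlanePoint (ZMod 3) → ZMod 3) :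
    syndrome (ternarySidePerm T) (ternaryInteriorPerm T) x =
      (ternaryCoords x).2 - codewordColumnSum T (ternaryCoords x).1 := by
  funext i
  simp only [syndrome, interiorColumn_ternaryInteriorPerm, interiorSum_add_mul]
  simp only [ternarySidePerm, switchSign, Equiv.trans_apply, Units.mulLeft_apply, Units.val_mk0,
    Equiv.coe_addLeft, ternaryCoords, columnSum, flipSum, LinearMap.prod_apply, Function.prod_apply,
    LinearMap.pi_apply, Pi.sub_apply, codewordColumnSum, Option.elim_some, Option.elim_none]
  ring

theorem ternaryCode_eq_preimage {N : ℕ} (ε : Fin N ≃ PlanePoint (ZMod 3)) :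
    ternaryCode T ε = (ternaryCoords ∘ₗ LinearMap.funLeft (ZMod 3) (ZMod 3) ε.symm) ⁻¹'
      Set.univ.graphOn (codewordColumnSum T) := by
  ext x
  rw [ternaryCode, switchedCode, Set.mem_ofPred_eq, syndrome_ternary, sub_eq_zero, eq_comm]
  simp

theorem inr_mem_span_graphOn_codewordColumnSum (k : Fin 3 → ZMod 3) :
    ((0 : (Fin 3 → ZMod 3) × (Option (Fin 3) → ZMod 3)), k) ∈
      Submodule.span (ZMod 3) (Set.univ.graphOn (codewordColumnSum T)) := by
  have hgraph (y : Fin 3 → ZMod 3) : ((y, 0), codewordColumnSum T (y, 0)) ∈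
      Submodule.span (ZMod 3) (Set.univ.graphOn (codewordColumnSum T)) :=
    Submodule.subset_span (by simp)
  have hsq (y : Fin 3 → ZMod 3) : (0, 2 * y ^ 2) ∈
      Submodule.span (ZMod 3) (Set.univ.graphOn (codewordColumnSum T)) := by
    convert add_mem (hgraph y) (hgraph (-y)) using 1
    refine Prod.ext (by ext <;> simp) (funext fun i => ?_)
    simp only [codewordColumnSum, Prod.mk_add_mk, add_neg_cancel, Pi.mul_apply, Pi.ofNat_apply,
      Pi.pow_apply, Pi.add_apply, Pi.neg_apply, mul_zero, add_zero, sub_zero, neg_sq]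
    ring
  -- The difference of the two squares is `-8 * k`, which is `k` in characteristic 3.
  convert sub_mem (hsq (k - 1)) (hsq (k + 1)) using 1
  refine Prod.ext (by simp) (funext fun i => ?_)
  have h9 : (9 : ZMod 3) = 0 := rfl
  simp only [Prod.mk_sub_mk, Pi.sub_apply, Pi.mul_apply, Pi.ofNat_apply, Pi.pow_apply,
    Pi.add_apply]
  linear_combination k i * h9

theorem ternaryCoords_comp_funLeft_surjective {N : ℕ} (ε : Fin N ≃ PlanePoint (ZMod 3)) :
    Function.Surjective (ternaryCoords ∘ₗ LinearMap.funLeft (ZMod 3) (ZMod 3) ε.symm) :=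
  ternaryCoords_surjective.comp
    (LinearMap.funLeft_surjective_of_injective _ _ _ ε.symm.injective)

theorem affineSpan_ternaryCode {N : ℕ} (ε : Fin N ≃ PlanePoint (ZMod 3)) :
    affineSpan (ZMod 3) (ternaryCode T ε) = ⊤ := by
  rw [ternaryCode_eq_preimage]
  refine affineSpan_preimage_graphOn_univ_eq_top (ternaryCoords_comp_funLeft_surjective ε) ?_
    (inr_mem_span_graphOn_codewordColumnSum T)
  ext i
  simp [codewordColumnSum]

/-- The linear conditions on the coordinates of a period of a ternary code. -/
def periodConditions : ((Fin 3 → ZMod 3) × (Option (Fin 3) → ZMod 3)) × (Fin 3 → ZMod 3) →ₗ[ZMod 3]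
    (Fin 3 → ZMod 3) × (T → ZMod 3) × (Fin 3 → ZMod 3) :=
  let sums := LinearMap.fst _ _ _ ∘ₗ LinearMap.fst _ _ _
  let moments := LinearMap.snd _ _ _ ∘ₗ LinearMap.fst _ _ _
  sums.prod ((LinearMap.funLeft _ _ Subtype.val ∘ₗ moments).prod
    (LinearMap.snd _ _ _ - LinearMap.funLeft _ _ some ∘ₗ moments))

theorem periodConditions_surjective : Function.Surjective (periodConditions T) := by
  rintro ⟨y, t, k⟩
  obtain ⟨z, rfl⟩ := LinearMap.funLeft_surjective_of_injective (ZMod 3) (ZMod 3) _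
    (Subtype.val_injective (p := (· ∈ T))) t
  exact ⟨((y, z), k + LinearMap.funLeft (ZMod 3) (ZMod 3) some z), by simp [periodConditions]⟩

theorem mem_ker_periodConditions {y : Fin 3 → ZMod 3} {z : Option (Fin 3) → ZMod 3}
    {h : Fin 3 → ZMod 3} : ((y, z), h) ∈ LinearMap.ker (periodConditions T) ↔
      y = 0 ∧ (∀ o, switchIndicator T o * z o = 0) ∧ ∀ i, h i = z (some i) := by
  simp [periodConditions, switchIndicator, funext_iff, sub_eq_zero, LinearMap.funLeft_apply]

theorem codewordColumnSum_add {y : Fin 3 → ZMod 3} {z : Option (Fin 3) → ZMod 3}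
    {h : Fin 3 → ZMod 3} (hp : ((y, z), h) ∈ LinearMap.ker (periodConditions T))
    (w : (Fin 3 → ZMod 3) × (Option (Fin 3) → ZMod 3)) :
    codewordColumnSum T (w + (y, z)) = codewordColumnSum T w + h := by
  obtain ⟨rfl, hz, hh⟩ := (mem_ker_periodConditions T).1 hp
  funext i
  have hi : interiorSwitch T i * z none = 0 := by
    obtain rfl | hi := eq_or_ne i 0
    · simpa [interiorSwitch] using hz none
    · simp [interiorSwitch, hi]
  simp only [codewordColumnSum, Prod.fst_add, Prod.snd_add, Pi.add_apply, Pi.zero_apply, add_zero]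
  linear_combination w.1 i ^ 2 * hz (some i) - (w.1 i - 1) ^ 2 * hi - hh i

theorem mem_ker_periodConditions_of_codewordColumnSum_add {y : Fin 3 → ZMod 3}
    {z : Option (Fin 3) → ZMod 3} {h : Fin 3 → ZMod 3}
    (hp : ∀ w, codewordColumnSum T (w + (y, z)) = codewordColumnSum T w + h) :
    ((y, z), h) ∈ LinearMap.ker (periodConditions T) := by
  have hi (i : Fin 3) := period_coeff_conditions (by decide) (switchIndicator_mul_self T (some i))
    (e' := interiorSwitch T i) (b := y i) (n := z (some i)) (a := z none) (k := h i - y (i - 1))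
    fun s m => by
      have hsm := congrFun (hp (fun _ => s, fun o => o.elim 0 fun _ => m)) i
      simp only [codewordColumnSum, Prod.mk_add_mk, Pi.add_apply, Option.elim_some,
        Option.elim_none, zero_add, mul_zero, sub_zero] at hsm
      linear_combination hsm
  have hy : y = 0 := funext fun i => (hi i).1
  refine (mem_ker_periodConditions T).2 ⟨hy, ?_, fun i => by simpa [hy] using (hi i).2.2.2⟩
  rintro (_ | i)
  · simpa [interiorSwitch] using (hi 0).2.2.1
  · exact (hi i).2.1

theorem periods_graphOn_codewordColumnSum :
    periods (Set.univ.graphOn (codewordColumnSum T)) = LinearMap.ker (periodConditions T) := by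
  rw [periods_graphOn_univ]
  exact Set.ext fun ⟨⟨_, _⟩, _⟩ =>
    ⟨mem_ker_periodConditions_of_codewordColumnSum_add T, codewordColumnSum_add T⟩

theorem kerDim_ternaryCode_add {N : ℕ} (ε : Fin N ≃ PlanePoint (ZMod 3)) :
    kerDim (ZMod 3) (ternaryCode T ε) + (T.card + 6) = N := by
  have hsurj := (periodConditions_surjective T).comp (ternaryCoords_comp_funLeft_surjective ε)
  rw [← LinearMap.coe_comp] at hsurj
  have h := kerDim_add_finrank_of_periods_eq_ker (X := ternaryCode T ε) hsurj (by
    rw [ternaryCode_eq_preimage, periods_preimage (ternaryCoords_comp_funLeft_surjective ε),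
      periods_graphOn_codewordColumnSum]
    rfl)
  simp only [Module.finrank_prod, Module.finrank_fintype_fun_eq_card, Fintype.card_fin,
    Fintype.card_coe] at h
  omega

end Ternary

theorem statement7 :
    ∀ k ∈ ({3, 4, 5, 6, 7} : Set ℕ),
      ∃ C : Set (Fin 13 → ZMod 3),
        IsTiling (hammingBall1 (ZMod 3) 13) C ∧
        affineSpan (ZMod 3) C = ⊤ ∧
        kerDim (ZMod 3) C = k := by
  intro k hk
  have hk' : 3 ≤ k ∧ k ≤ 7 := by
    rcases hk with rfl | rfl | rfl | rfl | rfl <;> norm_num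
  let ε : Fin 13 ≃ PlanePoint (ZMod 3) := Fintype.equivOfCardEq rfl
  obtain ⟨T, -, hT⟩ : ∃ T ⊆ (Finset.univ : Finset (Option (Fin 3))), T.card = 7 - k :=
    Finset.exists_subset_card_eq (show 7 - k ≤ 4 by omega)
  refine ⟨ternaryCode T ε, isTiling_switchedCode _ _ ε, affineSpan_ternaryCode T ε, ?_⟩
  have hdim := kerDim_ternaryCode_add T ε
  omega
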